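/- arXiv:2410.10649 — 2 statements merged into one kernel-verified Lean document; each statement's English description precedes it below -/
import Mathlib

section
/- Let d ≥ 1, l ∈ ℕ, Ω = [0,1]^d, m = C(l+d, l), and let A = {w_1, …, w_m} ⊂ Ω. Then A is a norming set for 𝒫_l(Ω) with some finite norming constant if and only if the Vandermonde matrix V_A is invertible. Moreover, there exists a constant C₀ ≥ 1 depending only on d and l (not on A) such that whenever these equivalent conditions hold, the minimal norming constant c_N of A and the smallest singular value c_S of V_A satisfy C₀⁻¹ c_N ≤ c_S⁻¹ ≤ C₀ c_N. -/
open Matrix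

noncomputable section

/-- Degree-then-lexicographic strict order on multi-indices in ℕ^d. -/
def degLex {d : ℕ} (k k' : Fin d → ℕ) : Prop :=
  (∑ j, k j < ∑ j, k' j) ∨
    ((∑ j, k j = ∑ j, k' j) ∧ ∃ i : Fin d, k i < k' i ∧ ∀ j : Fin d, j < i → k j = k' j)

/-- `kE` enumerates all multi-indices of ℕ^d in increasing degree-then-lex order. -/
def IsMultiIndexEnum (d : ℕ) (kE : ℕ → Fin d → ℕ) : Prop :=
  Function.Bijective kE ∧ ∀ i j : ℕ, i < j → degLex (kE i) (kE j)

/-- The vector `v_x = (x^{k_{(1)}}, …, x^{k_{(m)}})ᵀ`. -/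
def vVec {d : ℕ} (kE : ℕ → Fin d → ℕ) (m : ℕ) (x : Fin d → ℝ) : Fin m → ℝ :=
  fun i => ∏ t, x t ^ kE (i : ℕ) t

/-- The Vandermonde matrix `V_A` with entries `V_A[i,j] = (w_j)^{k_{(i)}}`. -/
def vand {d : ℕ} (kE : ℕ → Fin d → ℕ) (m : ℕ) (w : Fin m → Fin d → ℝ) :
    Matrix (Fin m) (Fin m) ℝ :=
  Matrix.of fun i j => ∏ t, w j t ^ kE (i : ℕ) t

/-- The unit cube `[0,1]^d`. -/
def unitCube (d : ℕ) : Set (Fin d → ℝ) := {x | ∀ t, 0 ≤ x t ∧ x t ≤ 1}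

/-- `A = {w_1,…,w_m}` is a norming set for `𝒫_l(Ω)` with norming constant `c`. -/
def IsNorming {d : ℕ} (l : ℕ) (Ω : Set (Fin d → ℝ)) {m : ℕ}
    (w : Fin m → Fin d → ℝ) (c : ℝ) : Prop :=
  ∀ P : MvPolynomial (Fin d) ℝ, P.totalDegree ≤ l →
    ∀ x ∈ Ω, |MvPolynomial.eval x P| ≤ c * ⨆ i : Fin m, |MvPolynomial.eval (w i) P|

/-- Smallest singular value of a square real matrix:
`σ_min(M) = min_{‖u‖₂ = 1} ‖M u‖₂`. -/
def singMin {m : ℕ} (M : Matrix (Fin m) (Fin m) ℝ) : ℝ :=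
  sInf {y : ℝ | ∃ u : Fin m → ℝ, ∑ i, u i ^ 2 = 1 ∧
    y = Real.sqrt (∑ i, (M *ᵥ u) i ^ 2)}

/-!
Interpolation at the nodes factors as `values ↦ coefficients ↦ polynomial on Ω`, and its norm is
exactly the minimal norming constant. The first factor is the inverse transposed Vandermonde matrix,
whose Euclidean operator norm is `c_S⁻¹`. The second factor is independent of the nodes, and it is
bounded below since it is injective on a finite-dimensional space. Hence the two norms agree up to a
constant independent of the nodes.
-/

theorem isGLB_norm_image_sphere {𝕜 E F : Type*} [RCLike 𝕜] [NormedAddCommGroup E]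
    [NormedSpace 𝕜 E] [NormedAddCommGroup F] [NormedSpace 𝕜 F] [Nontrivial E] (e : E ≃L[𝕜] F) :
    IsGLB ((‖e ·‖) '' Metric.sphere 0 1) ‖(e.symm : F →L[𝕜] E)‖⁻¹ := by
  have hpos : 0 < ‖(e.symm : F →L[𝕜] E)‖ := e.norm_symm_pos
  constructor
  · rintro _ ⟨u, hu, rfl⟩
    rw [inv_le_iff_one_le_mul₀' hpos]
    calc (1 : ℝ) = ‖e.symm (e u)‖ := by rw [e.symm_apply_apply, mem_sphere_zero_iff_norm.1 hu]
      _ ≤ ‖(e.symm : F →L[𝕜] E)‖ * ‖e u‖ := (e.symm : F →L[𝕜] E).le_opNorm _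
  · intro b hb
    rcases le_or_gt b 0 with hb0 | hb0
    · exact hb0.trans (inv_nonneg.2 hpos.le)
    have hbound : ∀ u, b * ‖u‖ ≤ ‖e u‖ := by
      intro u
      rcases eq_or_ne u 0 with rfl | hu
      · simp
      have hunit := hb ⟨_, mem_sphere_zero_iff_norm.2 (norm_smul_inv_norm (𝕜 := 𝕜) hu), rfl⟩
      simpa [norm_smul, le_inv_mul_iff₀ (norm_pos_iff.2 hu), mul_comm] using hunit
    refine (le_inv_comm₀ hb0 hpos).2 ?_
    refine ContinuousLinearMap.opNorm_le_bound _ (inv_nonneg.2 hb0.le) fun y => ?_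
    rw [le_inv_mul_iff₀ hb0]
    simpa using hbound (e.symm y)

theorem exists_opNorm_comp_comp_equivalent {𝕜 D E F G : Type*} [NontriviallyNormedField 𝕜]
    [SeminormedAddCommGroup D] [NormedSpace 𝕜 D] [SeminormedAddCommGroup E] [NormedSpace 𝕜 E]
    [SeminormedAddCommGroup F] [NormedSpace 𝕜 F] [SeminormedAddCommGroup G] [NormedSpace 𝕜 G]
    {K : NNReal} {L : F →L[𝕜] G} (hL : AntilipschitzWith K L) (e : D ≃L[𝕜] E) :
    ∃ C : ℝ, 1 ≤ C ∧ ∀ S : E →L[𝕜] F,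
      C⁻¹ * ‖L ∘L S ∘L (e : D →L[𝕜] E)‖ ≤ ‖S‖ ∧ ‖S‖ ≤ C * ‖L ∘L S ∘L (e : D →L[𝕜] E)‖ := by
  set C := max 1 (max (‖L‖ * ‖(e : D →L[𝕜] E)‖) (K * ‖(e.symm : E →L[𝕜] D)‖))
  have hC : 1 ≤ C := le_max_left _ _
  have hCL : ‖L‖ * ‖(e : D →L[𝕜] E)‖ ≤ C := le_max_of_le_right (le_max_left _ _)
  have hCK : K * ‖(e.symm : E →L[𝕜] D)‖ ≤ C := le_max_of_le_right (le_max_right _ _)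
  refine ⟨C, hC, fun S => ⟨?_, ?_⟩⟩
  · rw [inv_mul_le_iff₀ (one_pos.trans_le hC)]
    calc ‖L ∘L S ∘L (e : D →L[𝕜] E)‖ ≤ ‖L‖ * (‖S‖ * ‖(e : D →L[𝕜] E)‖) :=
          (L.opNorm_comp_le _).trans (by gcongr; exact S.opNorm_comp_le _)
      _ = ‖L‖ * ‖(e : D →L[𝕜] E)‖ * ‖S‖ := by ring
      _ ≤ C * ‖S‖ := by gcongr
  · refine S.opNorm_le_bound (by positivity) fun y => ?_
    calc ‖S y‖ ≤ K * ‖L (S y)‖ := hL.le_mul_norm (map_zero L) _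
      _ = K * ‖(L ∘L S ∘L (e : D →L[𝕜] E)) (e.symm y)‖ := by simp
      _ ≤ K * (‖L ∘L S ∘L (e : D →L[𝕜] E)‖ * (‖(e.symm : E →L[𝕜] D)‖ * ‖y‖)) := by
          gcongr
          exact (ContinuousLinearMap.le_opNorm _ _).trans
            (by gcongr; exact (e.symm : E →L[𝕜] D).le_opNorm y)
      _ = K * ‖(e.symm : E →L[𝕜] D)‖ * ‖L ∘L S ∘L (e : D →L[𝕜] E)‖ * ‖y‖ := by ring
      _ ≤ C * ‖L ∘L S ∘L (e : D →L[𝕜] E)‖ * ‖y‖ := by gcongr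

theorem norm_toEuclideanCLM_conjTranspose {𝕜 n : Type*} [RCLike 𝕜] [Fintype n] [DecidableEq n]
    (M : Matrix n n 𝕜) : ‖toEuclideanCLM (𝕜 := 𝕜) Mᴴ‖ = ‖toEuclideanCLM (𝕜 := 𝕜) M‖ := by
  rw [← star_eq_conjTranspose, map_star]
  exact ContinuousLinearMap.adjoint.norm_map _

theorem inv_singMin_eq_norm_toEuclideanCLM_inv {m : ℕ} [NeZero m] {M : Matrix (Fin m) (Fin m) ℝ}
    (hM : IsUnit M.det) : (singMin M)⁻¹ = ‖toEuclideanCLM (𝕜 := ℝ) M⁻¹‖ := by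
  let e : EuclideanSpace ℝ (Fin m) ≃L[ℝ] EuclideanSpace ℝ (Fin m) :=
    .equivOfInverse (toEuclideanCLM (𝕜 := ℝ) M) (toEuclideanCLM (𝕜 := ℝ) M⁻¹)
      (fun u => by ext; simp [nonsing_inv_mul M hM]) (fun u => by ext; simp [mul_nonsing_inv M hM])
  have hset : {y : ℝ | ∃ u : Fin m → ℝ, ∑ i, u i ^ 2 = 1 ∧ y = √(∑ i, (M *ᵥ u) i ^ 2)} =
      (‖e ·‖) '' Metric.sphere 0 1 := by
    ext y
    constructor
    · rintro ⟨u, hu, rfl⟩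
      exact ⟨WithLp.toLp 2 u, by simp [EuclideanSpace.norm_eq, hu], by
        simp [e, EuclideanSpace.norm_eq]⟩
    · rintro ⟨u, hu, rfl⟩
      refine ⟨u.ofLp, ?_, by simp [e, EuclideanSpace.norm_eq]⟩
      simpa [EuclideanSpace.norm_eq] using hu
  rw [singMin, hset, (isGLB_norm_image_sphere e).csInf_eq (by simp), inv_inv]
  rfl

-- The slack `l - |k|` as an extra entry turns degree at most `l` into degree equal to `l`.
theorem ncard_multiIndex_degree_le (d l : ℕ) :
    {k : Fin d → ℕ | ∑ j, k j ≤ l}.ncard = (l + d).choose l := by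
  have himage : {k : Fin d → ℕ | ∑ j, k j ≤ l} =
      Fin.tail '' {k : Fin (d + 1) → ℕ | ∑ j, k j = l} := by
    ext k
    constructor
    · intro hk
      exact ⟨Fin.cons (l - ∑ j, k j) k, by
        simpa [Fin.sum_univ_succ] using Nat.sub_add_cancel hk, Fin.tail_cons _ _⟩
    · rintro ⟨k, rfl, rfl⟩
      simp [Fin.sum_univ_succ, Fin.tail]
  have hinj : Set.InjOn Fin.tail {k : Fin (d + 1) → ℕ | ∑ j, k j = l} := by
    intro k hk k' hk' htail
    have h0 : k 0 = k' 0 := by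
      have hsum : ∑ j : Fin d, k j.succ = ∑ j : Fin d, k' j.succ :=
        congrArg (fun t : Fin d → ℕ => ∑ j, t j) htail
      simp only [Set.mem_ofPred_eq, Fin.sum_univ_succ] at hk hk'
      omega
    rw [← Fin.cons_self_tail k, ← Fin.cons_self_tail k', h0, htail]
  rw [himage, hinj.ncard_image, ← Nat.card_coe_set_eq]
  refine (Nat.card_congr (Sym.equivNatSumOfFintype (Fin (d + 1)) l).symm).trans ?_
  rw [Nat.card_eq_fintype_card, Sym.card_sym_eq_choose, Fintype.card_fin]
  congr 1
  omega

theorem isLowerSet_eq_Iio_ncard {s : Set ℕ} (hs : IsLowerSet s) (hfin : s.Finite) :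
    s = Set.Iio s.ncard := by
  obtain rfl | ⟨n, rfl⟩ := hs.eq_univ_or_Iio
  · exact absurd hfin Set.infinite_univ
  · rw [Set.ncard_Iio_nat]

theorem IsMultiIndexEnum.monotone_degree {d : ℕ} {kE : ℕ → Fin d → ℕ}
    (hkE : IsMultiIndexEnum d kE) : Monotone fun i => ∑ j, kE i j :=
  monotone_iff_forall_lt.2 fun i i' hlt => (hkE.2 i i' hlt).elim le_of_lt fun h => h.1.le

theorem IsMultiIndexEnum.bijOn_Iio_choose {d : ℕ} {kE : ℕ → Fin d → ℕ}
    (hkE : IsMultiIndexEnum d kE) (l : ℕ) :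
    Set.BijOn kE (Set.Iio ((l + d).choose l)) {k | ∑ j, k j ≤ l} := by
  set s := kE ⁻¹' {k | ∑ j, k j ≤ l}
  have himage : kE '' s = {k | ∑ j, k j ≤ l} := Set.image_preimage_eq _ hkE.1.2
  have hcard : s.ncard = (l + d).choose l := by
    rw [← Set.ncard_image_of_injective s hkE.1.1, himage, ncard_multiIndex_degree_le]
  have hfin : s.Finite := Set.finite_of_ncard_pos (hcard ▸ Nat.choose_pos (Nat.le_add_right l d))
  have hlower : IsLowerSet s := fun i i' hle hi => (hkE.monotone_degree hle).trans hi
  rw [← hcard, ← isLowerSet_eq_Iio_ncard hlower hfin]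
  exact himage ▸ hkE.1.1.injOn.bijOn_image

/-- A set `Ω` is determining for `𝒫_l` if no nonzero polynomial of degree at most `l` vanishes
identically on `Ω`, so that the sup norm over a compact `Ω` is a norm on `𝒫_l`. -/
def IsDetermining {d : ℕ} (l : ℕ) (Ω : Set (Fin d → ℝ)) : Prop :=
  ∀ P : MvPolynomial (Fin d) ℝ, P.totalDegree ≤ l →
    (∀ x ∈ Ω, MvPolynomial.eval x P = 0) → P = 0

theorem IsDetermining.nonempty {d l : ℕ} {Ω : Set (Fin d → ℝ)} (hΩ : IsDetermining l Ω) :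
    Ω.Nonempty := by
  rw [Set.nonempty_iff_ne_empty]
  rintro rfl
  exact one_ne_zero (hΩ 1 (by simp) (by simp))

theorem unitCube_eq_Icc (d : ℕ) : unitCube d = Set.Icc 0 1 := by
  ext x
  simp [unitCube, Pi.le_def, forall_and]

theorem isDetermining_unitCube (d l : ℕ) : IsDetermining l (unitCube d) := fun P _ hP =>
  MvPolynomial.funext_set (fun _ => Set.Icc (0 : ℝ) 1) (fun _ => Set.Icc_infinite one_pos)
    fun x hx => by simpa using hP x fun t => hx t trivial

section Coefficients

variable {d l m : ℕ} {kE : ℕ → Fin d → ℕ} {Ω : Set (Fin d → ℝ)}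

/-- The polynomial whose coefficients at the first `m` multi-indices in the enumeration `kE` are
`a 0, …, a (m - 1)`, as a linear map in the coefficient vector `a`. -/
def polyOfCoeffs (kE : ℕ → Fin d → ℕ) (m : ℕ) : (Fin m → ℝ) →ₗ[ℝ] MvPolynomial (Fin d) ℝ :=
  Fintype.linearCombination ℝ fun i : Fin m =>
    MvPolynomial.monomial (Finsupp.equivFunOnFinite.symm (kE i)) 1

theorem eval_polyOfCoeffs (kE : ℕ → Fin d → ℕ) (a : Fin m → ℝ) (x : Fin d → ℝ) :
    MvPolynomial.eval x (polyOfCoeffs kE m a) = vVec kE m x ⬝ᵥ a := by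
  simp [polyOfCoeffs, Fintype.linearCombination_apply, MvPolynomial.eval_monomial, vVec,
    dotProduct, Finsupp.prod_fintype, mul_comm]

theorem polyOfCoeffs_injective (hkE : Set.InjOn kE (Set.Iio m)) :
    Function.Injective (polyOfCoeffs kE m) := by
  have hinj : Function.Injective fun i : Fin m => Finsupp.equivFunOnFinite.symm (kE i) :=
    fun i j hij => Fin.ext (hkE i.2 j.2 (Finsupp.equivFunOnFinite.symm.injective hij))
  have hindep := (MvPolynomial.basisMonomials (Fin d) ℝ).linearIndependent.comp _ hinj
  simpa [Function.comp_def] using! hindep.fintypeLinearCombination_injective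

theorem range_polyOfCoeffs (hkE : Set.BijOn kE (Set.Iio m) {k | ∑ j, k j ≤ l}) :
    (polyOfCoeffs kE m).range = MvPolynomial.restrictTotalDegree (Fin d) ℝ l := by
  rw [polyOfCoeffs, Fintype.range_linearCombination, MvPolynomial.restrictTotalDegree,
    MvPolynomial.restrictSupport_eq_span]
  congr 1
  have himage : {k : Fin d →₀ ℕ | (k.sum fun _ e => e) ≤ l} =
      Set.range fun i : Fin m => Finsupp.equivFunOnFinite.symm (kE i) := by
    ext k
    constructor
    · intro hk
      obtain ⟨i, hi, hik⟩ := hkE.surjOn (show ⇑k ∈ _ by simpa [Finsupp.sum_fintype] using hk)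
      exact ⟨⟨i, hi⟩, by simp [hik]⟩
    · rintro ⟨i, rfl⟩
      simpa [Finsupp.sum_fintype] using hkE.mapsTo i.2
  rw [himage, ← Set.range_comp]
  rfl

theorem totalDegree_le_iff_mem_range_polyOfCoeffs
    (hkE : Set.BijOn kE (Set.Iio m) {k | ∑ j, k j ≤ l}) {P : MvPolynomial (Fin d) ℝ} :
    P.totalDegree ≤ l ↔ P ∈ (polyOfCoeffs kE m).range := by
  rw [range_polyOfCoeffs hkE, MvPolynomial.mem_restrictTotalDegree]

theorem vand_transpose_mulVec (kE : ℕ → Fin d → ℕ) (w : Fin m → Fin d → ℝ) (a : Fin m → ℝ)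
    (j : Fin m) : ((vand kE m w)ᵀ *ᵥ a) j = vVec kE m (w j) ⬝ᵥ a :=
  rfl

theorem isNorming_iff_coeff (hkE : Set.BijOn kE (Set.Iio m) {k | ∑ j, k j ≤ l})
    {w : Fin m → Fin d → ℝ} {c : ℝ} :
    IsNorming l Ω w c ↔
      ∀ a, ∀ x ∈ Ω, |vVec kE m x ⬝ᵥ a| ≤ c * ‖(vand kE m w)ᵀ *ᵥ a‖ := by
  have hnorm (y : Fin m → ℝ) : ‖y‖ = ⨆ i, |y i| :=
    le_antisymm
      ((pi_norm_le_iff_of_nonneg (Real.iSup_nonneg fun _ => abs_nonneg _)).2 fun i =>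
        le_ciSup (Set.finite_range fun i => |y i|).bddAbove i)
      (Real.iSup_le (norm_le_pi_norm y) (norm_nonneg y))
  simp [IsNorming, totalDegree_le_iff_mem_range_polyOfCoeffs hkE, eval_polyOfCoeffs, hnorm,
    vand_transpose_mulVec]

theorem IsDetermining.eq_zero_of_vVec_dotProduct (hΩ : IsDetermining l Ω)
    (hkE : Set.BijOn kE (Set.Iio m) {k | ∑ j, k j ≤ l}) {a : Fin m → ℝ}
    (ha : ∀ x ∈ Ω, vVec kE m x ⬝ᵥ a = 0) : a = 0 := by
  refine (map_eq_zero_iff _ (polyOfCoeffs_injective hkE.injOn)).1 (hΩ _ ?_ fun x hx => ?_)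
  · exact (totalDegree_le_iff_mem_range_polyOfCoeffs hkE).2 ⟨a, rfl⟩
  · rw [eval_polyOfCoeffs, ha x hx]

theorem IsNorming.isUnit_det_vand (hkE : Set.BijOn kE (Set.Iio m) {k | ∑ j, k j ≤ l})
    (hΩ : IsDetermining l Ω) {w : Fin m → Fin d → ℝ} {c : ℝ} (hc : IsNorming l Ω w c) :
    IsUnit (vand kE m w).det := by
  rw [isUnit_iff_ne_zero, ← det_transpose]
  intro hdet
  obtain ⟨a, ha, h0⟩ := exists_mulVec_eq_zero_iff.2 hdet
  refine ha (hΩ.eq_zero_of_vVec_dotProduct hkE fun x hx => ?_)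
  simpa [h0] using (isNorming_iff_coeff hkE).1 hc a x hx

theorem continuous_vVec (kE : ℕ → Fin d → ℕ) (m : ℕ) : Continuous (vVec kE m) := by
  unfold vVec
  fun_prop

end Coefficients

section Interpolation

variable {d l m : ℕ} (kE : ℕ → Fin d → ℕ) (Ω : Set (Fin d → ℝ))

/-- Restriction to `Ω` of the polynomial with coefficient vector `a`. The coefficients carry the
Euclidean norm; for compact `Ω` the functions carry the sup norm. -/
def coeffToFun (m : ℕ) : EuclideanSpace ℝ (Fin m) →L[ℝ] C(Ω, ℝ) :=
  LinearMap.toContinuousLinearMap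
    { toFun a := ⟨fun x => vVec kE m x ⬝ᵥ a.ofLp, by
        have := continuous_vVec kE m
        fun_prop⟩
      map_add' a b := by ext; simp [dotProduct_add]
      map_smul' r a := by ext; simp [dotProduct_smul] }

/-- The Lagrange interpolation operator at the nodes `w`: the values `y` are sent to the function
on `Ω` of the polynomial taking the value `y j` at `w j`. It is meaningful only if the Vandermonde
matrix is invertible; for compact `Ω` its norm is the Lebesgue constant of the nodes. -/
def interpolation (w : Fin m → Fin d → ℝ) : (Fin m → ℝ) →L[ℝ] C(Ω, ℝ) :=
  coeffToFun kE Ω m ∘L toEuclideanCLM (𝕜 := ℝ) ((vand kE m w)⁻¹)ᵀ ∘L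
    ((EuclideanSpace.equiv (Fin m) ℝ).symm : (Fin m → ℝ) →L[ℝ] EuclideanSpace ℝ (Fin m))

variable {kE Ω} [CompactSpace Ω]

theorem IsDetermining.exists_antilipschitzWith_coeffToFun (hΩ : IsDetermining l Ω)
    (hkE : Set.BijOn kE (Set.Iio m) {k | ∑ j, k j ≤ l}) :
    ∃ K, AntilipschitzWith K (coeffToFun kE Ω m) := by
  have hker : (coeffToFun kE Ω m).toLinearMap.ker = ⊥ := by
    refine LinearMap.ker_eq_bot'.2 fun a ha => ?_
    have := hΩ.eq_zero_of_vVec_dotProduct hkE (a := a.ofLp) fun x hx =>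
      DFunLike.congr_fun ha ⟨x, hx⟩
    ext i
    exact congrFun this i
  obtain ⟨K, -, hK⟩ := LinearMap.exists_antilipschitzWith _ hker
  exact ⟨K, hK⟩

theorem isNorming_iff_norm_interpolation_le [NeZero m]
    (hkE : Set.BijOn kE (Set.Iio m) {k | ∑ j, k j ≤ l})
    (hΩ : Ω.Nonempty) {w : Fin m → Fin d → ℝ} (hw : IsUnit (vand kE m w).det) {c : ℝ} :
    IsNorming l Ω w c ↔ ‖interpolation kE Ω w‖ ≤ c := by
  have : Nonempty Ω := hΩ.to_subtype
  have hwT : IsUnit (vand kE m w)ᵀ.det := by rwa [det_transpose]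
  have hfun (a : Fin m → ℝ) (x : Ω) :
      interpolation kE Ω w ((vand kE m w)ᵀ *ᵥ a) x = vVec kE m x ⬝ᵥ a := by
    simp [interpolation, coeffToFun, transpose_nonsing_inv, nonsing_inv_mul _ hwT]
  have hsurj : Function.Surjective ((vand kE m w)ᵀ *ᵥ ·) :=
    mulVec_surjective_iff_isUnit.2 ((isUnit_iff_isUnit_det _).2 hwT)
  calc IsNorming l Ω w c
      ↔ ∀ a, ∀ x ∈ Ω, |vVec kE m x ⬝ᵥ a| ≤ c * ‖(vand kE m w)ᵀ *ᵥ a‖ := isNorming_iff_coeff hkE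
    _ ↔ ∀ a, ‖interpolation kE Ω w ((vand kE m w)ᵀ *ᵥ a)‖ ≤ c * ‖(vand kE m w)ᵀ *ᵥ a‖ := by
      simp only [ContinuousMap.norm_le_of_nonempty, hfun, Real.norm_eq_abs, Subtype.forall]
    _ ↔ ∀ y, ‖interpolation kE Ω w y‖ ≤ c * ‖y‖ :=
      (hsurj.forall (p := fun y => ‖interpolation kE Ω w y‖ ≤ c * ‖y‖)).symm
    _ ↔ ‖interpolation kE Ω w‖ ≤ c := by
      refine ⟨fun h => ContinuousLinearMap.opNorm_le_bound _ ?_ h, fun h =>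
        ContinuousLinearMap.le_of_opNorm_le _ h⟩
      simpa using (norm_nonneg _).trans (h 1)

end Interpolation

theorem stmt1_general {d l m : ℕ} {kE : ℕ → Fin d → ℕ}
    (hkE : Set.BijOn kE (Set.Iio m) {k | ∑ j, k j ≤ l}) {Ω : Set (Fin d → ℝ)}
    (hcompact : IsCompact Ω) (hΩ : IsDetermining l Ω) :
    ∃ C₀ : ℝ, 1 ≤ C₀ ∧ ∀ w : Fin m → Fin d → ℝ,
      ((∃ c : ℝ, IsNorming l Ω w c) ↔ IsUnit (vand kE m w).det) ∧
      (IsUnit (vand kE m w).det →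
        C₀⁻¹ * sInf {c : ℝ | IsNorming l Ω w c} ≤ (singMin (vand kE m w))⁻¹ ∧
          (singMin (vand kE m w))⁻¹ ≤ C₀ * sInf {c : ℝ | IsNorming l Ω w c}) := by
  have : CompactSpace Ω := isCompact_iff_compactSpace.1 hcompact
  have : NeZero m := ⟨by rintro rfl; simpa using hkE.surjOn (show 0 ∈ _ by simp)⟩
  obtain ⟨K, hK⟩ := hΩ.exists_antilipschitzWith_coeffToFun hkE
  obtain ⟨C, hC, hbound⟩ :=
    exists_opNorm_comp_comp_equivalent hK (EuclideanSpace.equiv (Fin m) ℝ).symm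
  refine ⟨C, hC, fun w => ⟨⟨fun ⟨c, hc⟩ => hc.isUnit_det_vand hkE hΩ, fun hw =>
    ⟨_, (isNorming_iff_norm_interpolation_le hkE hΩ.nonempty hw).2 le_rfl⟩⟩, fun hw => ?_⟩⟩
  have hset : {c : ℝ | IsNorming l Ω w c} = Set.Ici ‖interpolation kE Ω w‖ :=
    Set.ext fun c => isNorming_iff_norm_interpolation_le hkE hΩ.nonempty hw
  rw [hset, csInf_Ici, inv_singMin_eq_norm_toEuclideanCLM_inv hw,
    ← norm_toEuclideanCLM_conjTranspose, conjTranspose_eq_transpose_of_trivial]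
  exact hbound _

/-- Lemma `norming def`: on `Ω = [0,1]^d`, a set of `m = C(l+d,l)` points is
a norming set for `𝒫_l(Ω)` with some finite norming constant iff the Vandermonde matrix is
invertible; moreover some `C₀ ≥ 1` depending only on `d, l` relates the minimal norming
constant `c_N` and the smallest singular value `c_S` via `C₀⁻¹ c_N ≤ c_S⁻¹ ≤ C₀ c_N`. -/
theorem stmt1 (d l : ℕ) (hd : 1 ≤ d)
    (kE : ℕ → Fin d → ℕ) (hkE : IsMultiIndexEnum d kE) :
    ∃ C₀ : ℝ, 1 ≤ C₀ ∧
      ∀ w : Fin ((l + d).choose l) → Fin d → ℝ, (∀ i, w i ∈ unitCube d) →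
        ((∃ c : ℝ, IsNorming l (unitCube d) w c) ↔
          IsUnit (vand kE ((l + d).choose l) w).det) ∧
        (IsUnit (vand kE ((l + d).choose l) w).det →
          C₀⁻¹ * sInf {c : ℝ | IsNorming l (unitCube d) w c} ≤
              (singMin (vand kE ((l + d).choose l) w))⁻¹ ∧
            (singMin (vand kE ((l + d).choose l) w))⁻¹ ≤
              C₀ * sInf {c : ℝ | IsNorming l (unitCube d) w c}) := by
  obtain ⟨C₀, hC₀, h⟩ := stmt1_general (hkE.bijOn_Iio_choose l)
    (unitCube_eq_Icc d ▸ isCompact_Icc : IsCompact (unitCube d)) (isDetermining_unitCube d l)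
  exact ⟨C₀, hC₀, fun w _ => h w⟩
end
end

section
/- Let α > 0, d ≥ 1, ℓ = ⌊α⌋⁻, and let k ∈ ℕ^d be a multi-index with |k| = 2ℓ. Then K_α is 2ℓ-times continuously differentiable on ℝ^d, and there exist constants C > 0 and δ ∈ (0,1), depending only on α and d, such that for all h ∈ ℝ^d with 0 < ‖h‖₂ ≤ δ: |∂^k K_α(0) − ∂^k K_α(h)| ≤ C ‖h‖₂^{2(α−ℓ)} if α ∉ ℕ, and |∂^k K_α(0) − ∂^k K_α(h)| ≤ C ‖h‖₂² ln(1/‖h‖₂) if α ∈ ℕ. -/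
open Matrix MeasureTheory

noncomputable section

/-- The Matérn function with regularity `α` on ℝ^d (Fourier normalization):
`K_α(x) = ∫ cos⟨x,ξ⟩ (1+‖ξ‖₂²)^{-(α+d/2)} dξ`. -/
def matern (α : ℝ) (d : ℕ) (x : Fin d → ℝ) : ℝ :=
  ∫ ξ : Fin d → ℝ, Real.cos (∑ j, x j * ξ j) * (1 + ∑ j, ξ j ^ 2) ^ (-(α + (d : ℝ) / 2))

/-- `⌊α⌋⁻`, the largest integer strictly smaller than `α` (for `α > 0`). -/
def lbelow (α : ℝ) : ℕ := Nat.ceil α - 1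

/-- `α` is a (nonnegative) integer. -/
def IsNatVal (α : ℝ) : Prop := ∃ n : ℕ, α = n

/-- The Euclidean norm `‖x‖₂` on ℝ^d. -/
def nrm {d : ℕ} (x : Fin d → ℝ) : ℝ := Real.sqrt (∑ j, x j ^ 2)

/-- Partial derivative in the `j`-th coordinate. -/
def pder (d : ℕ) (j : Fin d) (f : (Fin d → ℝ) → ℝ) : (Fin d → ℝ) → ℝ :=
  fun x => fderiv ℝ f x (Pi.single j 1)

/-- The iterated partial derivative `∂^k` associated with a multi-index `k ∈ ℕ^d`. -/
def mder (d : ℕ) (k : Fin d → ℕ) (f : (Fin d → ℝ) → ℝ) : (Fin d → ℝ) → ℝ :=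
  (List.finRange d).foldr (fun j g => (pder d j)^[k j] g) f

/-- Mixed derivative `F^{(k₁,k₂)}(x₁,x₂) = ∂^{k₁}_{x₁} ∂^{k₂}_{x₂} F(x₁,x₂)`. -/
def mder2 (d : ℕ) (k₁ k₂ : Fin d → ℕ) (F : (Fin d → ℝ) → (Fin d → ℝ) → ℝ)
    (x₁ x₂ : Fin d → ℝ) : ℝ :=
  mder d k₁ (fun y => mder d k₂ (F y) x₂) x₁

/-- The Matérn kernel matrix `K_{A,A} = (K(w_i, w_j))_{i,j}`. -/
def maternMat (α : ℝ) (d : ℕ) {n : ℕ} (w : Fin n → Fin d → ℝ) :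
    Matrix (Fin n) (Fin n) ℝ :=
  Matrix.of fun i j => matern α d (w i - w j)

/-- The Matérn kernel column vector `K_{A,x} = (K(w_i, x))_i`. -/
def maternVec (α : ℝ) (d : ℕ) {n : ℕ} (w : Fin n → Fin d → ℝ) (x : Fin d → ℝ) :
    Fin n → ℝ :=
  fun i => matern α d (w i - x)

/-- The conditional kernel `K̃(x₁,x₂) = K(x₁,x₂) − K_{x₁,A} K_{A,A}⁻¹ K_{A,x₂}`. -/
def condK (α : ℝ) (d : ℕ) {n : ℕ} (w : Fin n → Fin d → ℝ) (x₁ x₂ : Fin d → ℝ) : ℝ :=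
  matern α d (x₁ - x₂) -
    maternVec α d w x₁ ⬝ᵥ ((maternMat α d w)⁻¹ *ᵥ maternVec α d w x₂)

/-!
`K_α` is the cosine transform of `(1 + ‖ξ‖²) ^ (-(α + d/2))`, and differentiating it `2ℓ` times
multiplies this density by `± ξ^k`. The increment of `∂^k K_α` at `0` is therefore the integral of
`1 - cos⟨h, ξ⟩` against a density of size at most `(1 + ‖ξ‖²) ^ (-(β + d/2))`, where
`β = α - ℓ ∈ (0, 1]`. Bound `1 - cos⟨h, ξ⟩` by `2 min(1, ‖h‖² ‖ξ‖²)` and split the frequencies at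
`1` and `1 / ‖h‖`: the high ones contribute `‖h‖ ^ (2β)`, the low ones `‖h‖²`, and the middle range
contributes `‖h‖² ∫ y ^ (1 - 2β) dy` over `1 ≤ y ≤ 1 / ‖h‖`, which is again of order `‖h‖ ^ (2β)`
for `β < 1` but produces the logarithm for `β = 1`.
-/

section FourierIntegral

open Complex FourierTransform VectorFourier

variable {d n : ℕ} {E : Type*} [NormedAddCommGroup E]

/-- `f` has finite absolute moments up to order `n`: the decay at infinity which makes its Fourier
integral `n` times continuously differentiable. -/
structure HasMoments (n : ℕ) (f : (Fin d → ℝ) → E) : Prop where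
  aestronglyMeasurable : AEStronglyMeasurable f
  integrable_norm_pow_mul : ∀ m ≤ n, Integrable fun ξ => ‖ξ‖ ^ m * ‖f ξ‖

/-- The pairing `-⟨ξ, x⟩ / (2π)` on `ℝ^d`, scaled so that Mathlib's Fourier kernel
`exp (-2πi L(ξ, x))` becomes `exp (i⟨ξ, x⟩)`. -/
def angularPairing (d : ℕ) : (Fin d → ℝ) →L[ℝ] (Fin d → ℝ) →L[ℝ] ℝ :=
  -(2 * Real.pi)⁻¹ • (dotProductBilin ℝ ℝ).toContinuousBilinearMap

/-- The Fourier integral `x ↦ ∫ exp (i⟨ξ, x⟩) f(ξ) dξ` in the normalization of `K_α`. -/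
def angularFourier (f : (Fin d → ℝ) → ℂ) : (Fin d → ℝ) → ℂ :=
  fourierIntegral 𝐞 volume (angularPairing d).toLinearMap₁₂ f

/-- The cosine transform `x ↦ ∫ cos⟨x, ξ⟩ g(ξ) dξ`, of which `K_α` is an instance. -/
def cosTransform (g : (Fin d → ℝ) → ℝ) (x : Fin d → ℝ) : ℝ :=
  ∫ ξ, Real.cos (∑ j, x j * ξ j) * g ξ

lemma HasMoments.mono {m : ℕ} {f : (Fin d → ℝ) → E} (hf : HasMoments n f) (h : m ≤ n) :
    HasMoments m f :=
  ⟨hf.1, fun i hi => hf.2 i (hi.trans h)⟩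

lemma HasMoments.integrable {f : (Fin d → ℝ) → E} (hf : HasMoments n f) : Integrable f :=
  (integrable_norm_iff hf.1).1 <| by simpa using hf.2 0 n.zero_le

lemma HasMoments.ofReal {g : (Fin d → ℝ) → ℝ} (hg : HasMoments n g) :
    HasMoments n fun ξ => (g ξ : ℂ) :=
  ⟨continuous_ofReal.comp_aestronglyMeasurable hg.1, by simpa using hg.2⟩

lemma HasMoments.I_mul_coord {f : (Fin d → ℝ) → ℂ} (hf : HasMoments (n + 1) f) (j : Fin d) :
    HasMoments n fun ξ => I * ξ j * f ξ := by
  have hmeas : AEStronglyMeasurable fun ξ : Fin d → ℝ => I * ξ j * f ξ :=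
    (by fun_prop : Continuous fun ξ : Fin d → ℝ => I * ξ j).aestronglyMeasurable.mul hf.1
  refine ⟨hmeas, fun m hm => (hf.2 (m + 1) (by lia)).mono'
    (AEStronglyMeasurable.mul (by fun_prop) hmeas.norm) (.of_forall fun ξ => ?_)⟩
  calc ‖‖ξ‖ ^ m * ‖I * ξ j * f ξ‖‖ = ‖ξ‖ ^ m * (‖ξ j‖ * ‖f ξ‖) := by simp
    _ ≤ ‖ξ‖ ^ m * (‖ξ‖ * ‖f ξ‖) := by gcongr; exact norm_le_pi_norm ξ j
    _ = ‖ξ‖ ^ (m + 1) * ‖f ξ‖ := by ring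

lemma HasMoments.I_mul_coord_pow {f : (Fin d → ℝ) → ℂ} (j : Fin d) (m : ℕ)
    (hf : HasMoments (n + m) f) : HasMoments n fun ξ => (I * ξ j) ^ m * f ξ := by
  induction m generalizing f with
  | zero => simpa using hf
  | succ m ih => simpa [pow_succ, mul_assoc] using ih (hf.I_mul_coord j)

lemma fourierChar_neg_angularPairing (ξ x : Fin d → ℝ) :
    (𝐞 (-angularPairing d ξ x) : ℂ) = exp ((∑ j, x j * ξ j : ℝ) * I) := by
  rw [Real.fourierChar_apply]
  congr 3
  simp only [angularPairing, _root_.smul_apply, LinearMap.toContinuousBilinearMap_apply,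
    dotProductBilin_apply_apply, dotProduct, smul_eq_mul, mul_comm (ξ _)]
  field_simp

lemma contDiff_angularFourier {f : (Fin d → ℝ) → ℂ} (hf : HasMoments n f) :
    ContDiff ℝ n (angularFourier f) :=
  contDiff_fourierIntegral (N := n) _ fun m hm => hf.2 m (mod_cast hm)

lemma fderiv_angularFourier_single {f : (Fin d → ℝ) → ℂ} (hf : HasMoments 1 f) (j : Fin d)
    (x : Fin d → ℝ) :
    fderiv ℝ (angularFourier f) x (Pi.single j 1) = angularFourier (fun ξ => I * ξ j * f ξ) x := by
  have hf' : Integrable fun ξ : Fin d → ℝ => ‖ξ‖ * ‖f ξ‖ := by simpa using hf.2 1 le_rfl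
  have hsmul : Integrable (fourierSMulRight (angularPairing d) f) := by
    refine (hf'.const_mul (2 * Real.pi * ‖angularPairing d‖)).mono' hf.1.fourierSMulRight
      (.of_forall fun ξ => ?_)
    simpa only [mul_assoc] using norm_fourierSMulRight_le (angularPairing d) f ξ
  have hpi : (Real.pi : ℂ) ≠ 0 := by exact_mod_cast Real.pi_ne_zero
  rw [angularFourier, fderiv_fourierIntegral _ hf.integrable hf', angularFourier,
    fourierIntegral_continuousLinearMap_apply Real.continuous_fourierChar hsmul]
  congr 1
  funext ξ
  simp only [angularPairing, _root_.mul_inv_rev, fourierSMulRight_apply, _root_.smul_apply,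
    LinearMap.toContinuousBilinearMap_apply, dotProductBilin_apply_apply, dotProduct_single,
    mul_one, smul_eq_mul, neg_mul, neg_smul, real_smul, ofReal_mul, ofReal_inv, ofReal_ofNat,
    mul_neg, neg_neg]
  field_simp

lemma pder_re_angularFourier {f : (Fin d → ℝ) → ℂ} (hf : HasMoments 1 f) (j : Fin d) :
    pder d j (fun x => (angularFourier f x).re) =
      fun x => (angularFourier (fun ξ => I * ξ j * f ξ) x).re := by
  funext x
  have hdiff := (contDiff_angularFourier hf).differentiable (by simp) x
  have hre := (reCLM.hasFDerivAt.comp x hdiff.hasFDerivAt).fderiv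
  rw [← fderiv_angularFourier_single hf]
  exact DFunLike.congr_fun hre (Pi.single j 1)

lemma pder_iterate_re_angularFourier (j : Fin d) (m : ℕ) {f : (Fin d → ℝ) → ℂ}
    (hf : HasMoments m f) :
    (pder d j)^[m] (fun x => (angularFourier f x).re) =
      fun x => (angularFourier (fun ξ => (I * ξ j) ^ m * f ξ) x).re := by
  induction m generalizing f with
  | zero => simp
  | succ m ih =>
    rw [Function.iterate_succ_apply, pder_re_angularFourier (hf.mono (by lia)),
      ih (hf.I_mul_coord j)]
    simp only [pow_succ, mul_assoc]

lemma HasMoments.list_prod_I_mul_coord_pow (k : Fin d → ℕ) (l : List (Fin d))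
    {f : (Fin d → ℝ) → ℂ} (hf : HasMoments (n + (l.map k).sum) f) :
    HasMoments n fun ξ => (l.map fun j => (I * ξ j) ^ k j).prod * f ξ := by
  induction l generalizing n with
  | nil => simpa using hf
  | cons j l ih =>
    have htail := ih (n := n + k j) (by simpa [add_assoc] using hf)
    simpa [mul_assoc] using htail.I_mul_coord_pow j (k j)

lemma foldr_pder_re_angularFourier (k : Fin d → ℕ) (l : List (Fin d)) {f : (Fin d → ℝ) → ℂ}
    (hf : HasMoments (l.map k).sum f) :
    l.foldr (fun j g => (pder d j)^[k j] g) (fun x => (angularFourier f x).re) =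
      fun x => (angularFourier (fun ξ => (l.map fun j => (I * ξ j) ^ k j).prod * f ξ) x).re := by
  induction l with
  | nil => simp
  | cons j l ih =>
    have htail := HasMoments.list_prod_I_mul_coord_pow (n := k j) k l (by simpa using hf)
    rw [List.foldr_cons, ih (hf.mono (by simp)), pder_iterate_re_angularFourier j (k j) htail]
    simp only [List.map_cons, List.prod_cons, mul_assoc]

lemma mder_re_angularFourier (k : Fin d → ℕ) {f : (Fin d → ℝ) → ℂ}
    (hf : HasMoments (∑ j, k j) f) :
    mder d k (fun x => (angularFourier f x).re) =
      fun x => (angularFourier (fun ξ => (∏ j, (I * ξ j) ^ k j) * f ξ) x).re := by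
  rw [← List.sum_ofFn, List.ofFn_eq_map] at hf
  simpa only [mder, ← List.ofFn_eq_map, List.prod_ofFn] using foldr_pder_re_angularFourier k _ hf

lemma re_angularFourier_ofReal {g : (Fin d → ℝ) → ℝ} (hg : Integrable g) (x : Fin d → ℝ) :
    (angularFourier (fun ξ => (g ξ : ℂ)) x).re = cosTransform g x := by
  have hint : Integrable fun ξ => 𝐞 (-angularPairing d ξ x) • (g ξ : ℂ) :=
    (fourierIntegral_convergent_iff (L := (angularPairing d).toLinearMap₁₂)
      Real.continuous_fourierChar (angularPairing d).continuous₂ x).2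
      (hg.ofReal (𝕜 := ℂ))
  refine (integral_re hint).symm.trans (integral_congr_ae (.of_forall fun ξ => ?_))
  simp only [Circle.smul_def, fourierChar_neg_angularPairing, smul_eq_mul]
  simp [exp_ofReal_mul_I_re, -ofReal_sum]

lemma contDiff_cosTransform {g : (Fin d → ℝ) → ℝ} (hg : HasMoments n g) :
    ContDiff ℝ n (cosTransform g) := by
  simp only [← funext (re_angularFourier_ofReal hg.integrable)]
  exact reCLM.contDiff.comp (contDiff_angularFourier hg.ofReal)

lemma prod_I_mul_pow_eq {l : ℕ} {k : Fin d → ℕ} (hk : ∑ j, k j = 2 * l)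
    (ξ : Fin d → ℝ) : ∏ j, (I * ξ j) ^ k j = ((-1) ^ l * ∏ j, ξ j ^ k j : ℝ) := by
  simp [mul_pow, Finset.prod_mul_distrib, Finset.prod_pow_eq_pow_sum, hk, pow_mul]

lemma abs_prod_pow_le (k : Fin d → ℕ) (ξ : Fin d → ℝ) :
    |∏ j, ξ j ^ k j| ≤ ‖ξ‖ ^ ∑ j, k j := by
  rw [Finset.abs_prod, ← Finset.prod_pow_eq_pow_sum]
  gcongr with j
  rw [abs_pow]
  gcongr
  exact norm_le_pi_norm ξ j

lemma HasMoments.integrable_prod_pow_mul {k : Fin d → ℕ} {g : (Fin d → ℝ) → ℝ}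
    (hg : HasMoments (∑ j, k j) g) : Integrable fun ξ => (∏ j, ξ j ^ k j) * g ξ := by
  have hmeas : Continuous fun ξ : Fin d → ℝ => ∏ j, ξ j ^ k j := by fun_prop
  refine (hg.2 _ le_rfl).mono' (hmeas.aestronglyMeasurable.mul hg.1) (.of_forall fun ξ => ?_)
  rw [norm_mul]
  gcongr
  exact abs_prod_pow_le k ξ

lemma mder_cosTransform {l : ℕ} {k : Fin d → ℕ} (hk : ∑ j, k j = 2 * l)
    {g : (Fin d → ℝ) → ℝ} (hg : HasMoments (2 * l) g) :
    mder d k (cosTransform g) = cosTransform fun ξ => (-1) ^ l * (∏ j, ξ j ^ k j) * g ξ := by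
  have hint : Integrable fun ξ => (-1) ^ l * (∏ j, ξ j ^ k j) * g ξ := by
    simpa only [mul_assoc] using (HasMoments.integrable_prod_pow_mul (hk ▸ hg)).const_mul ((-1) ^ l)
  have hmder := mder_re_angularFourier k (hk ▸ hg.ofReal)
  simp only [prod_I_mul_pow_eq hk, ← ofReal_mul] at hmder
  simpa only [re_angularFourier_ofReal hg.integrable, re_angularFourier_ofReal hint] using hmder

end FourierIntegral

section RadialIntegral

open Real Set Module

variable {β r y : ℝ}

/-- The rate at which the increments at `0` of a cosine transform are small when its density decays
like `‖ξ‖ ^ (-(2β + d))`; the three terms are the contributions of the frequencies `‖ξ‖ ≤ 1`,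
`1 ≤ ‖ξ‖ ≤ 1 / r` and `1 / r ≤ ‖ξ‖`. -/
def maternModulus (β r : ℝ) : ℝ :=
  r ^ 2 + r ^ 2 * (∫ y in (1 : ℝ)..1 / r, y ^ (1 - 2 * β)) + r ^ (2 * β) / (2 * β)

/-- The majorant, in polar coordinates, of the increment at distance `r` from `0` of a cosine
transform whose density decays like `‖ξ‖ ^ (-(2β + d))`. -/
def radialMajorant (β r y : ℝ) : ℝ := min 1 (r ^ 2 * y ^ 2) * min 1 (y ^ (-2 * β - 1))

lemma maternModulus_le_rpow (hβ : 0 < β) (hβ1 : β < 1) (hr : 0 < r) (hr1 : r ≤ 1) :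
    maternModulus β r ≤ (1 + 1 / (2 - 2 * β) + 1 / (2 * β)) * r ^ (2 * β) := by
  have hsq : r ^ 2 ≤ r ^ (2 * β) := by
    rw [← rpow_two]
    exact rpow_le_rpow_of_exponent_ge hr hr1 (by linarith)
  have hscale : r ^ 2 * (1 / r) ^ (2 - 2 * β) = r ^ (2 * β) := by
    rw [one_div, inv_rpow hr.le, ← rpow_neg hr.le, ← rpow_two, ← rpow_add hr]
    ring_nf
  have hmiddle : ∫ y in (1 : ℝ)..1 / r, y ^ (1 - 2 * β) ≤ (1 / r) ^ (2 - 2 * β) / (2 - 2 * β) := by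
    rw [integral_rpow (.inl (by linarith)), one_rpow, show 1 - 2 * β + 1 = 2 - 2 * β by ring]
    gcongr <;> linarith
  calc maternModulus β r
      ≤ r ^ (2 * β) + r ^ 2 * ((1 / r) ^ (2 - 2 * β) / (2 - 2 * β)) + r ^ (2 * β) / (2 * β) := by
        unfold maternModulus
        gcongr
    _ = (1 + 1 / (2 - 2 * β) + 1 / (2 * β)) * r ^ (2 * β) := by
        rw [← mul_div_assoc, hscale]
        ring

lemma maternModulus_one_le_log (hr : 0 < r) (hr3 : r ≤ 1 / 3) :
    maternModulus 1 r ≤ 5 / 2 * (r ^ 2 * log (1 / r)) := by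
  have hr' : 3 ≤ 1 / r := by rw [le_div_iff₀ hr]; linarith
  have hlog : 1 ≤ log (1 / r) :=
    (le_log_iff_exp_le (by positivity)).2 (exp_one_lt_three.le.trans hr')
  have hmiddle : ∫ y in (1 : ℝ)..1 / r, y ^ (1 - 2 * 1 : ℝ) = log (1 / r) := by
    rw [show (1 - 2 * 1 : ℝ) = -1 by norm_num]
    simp only [rpow_neg_one]
    rw [integral_inv_of_pos one_pos (by positivity), div_one]
  calc maternModulus 1 r = r ^ 2 * (3 / 2 + log (1 / r)) := by
        rw [maternModulus, hmiddle, mul_one, rpow_two]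
        ring
    _ ≤ r ^ 2 * (3 / 2 * log (1 / r) + log (1 / r)) := by gcongr; linarith
    _ = 5 / 2 * (r ^ 2 * log (1 / r)) := by ring

lemma measurable_radialMajorant (β r : ℝ) : Measurable (radialMajorant β r) := by
  unfold radialMajorant
  fun_prop

lemma radialMajorant_nonneg (β r : ℝ) (hy : 0 < y) : 0 ≤ radialMajorant β r y := by
  unfold radialMajorant
  positivity

lemma radialMajorant_le_sq_mul_sq (β r : ℝ) (hy : 0 < y) :
    radialMajorant β r y ≤ r ^ 2 * y ^ 2 := by
  unfold radialMajorant
  exact (mul_le_of_le_one_right (by positivity) (min_le_left _ _)).trans (min_le_right _ _)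

lemma radialMajorant_le_sq_mul_rpow (β r : ℝ) (hy : 0 < y) :
    radialMajorant β r y ≤ r ^ 2 * y ^ (1 - 2 * β) := by
  calc radialMajorant β r y ≤ r ^ 2 * y ^ 2 * y ^ (-2 * β - 1) := by
        unfold radialMajorant
        gcongr
        exacts [min_le_right _ _, min_le_right _ _]
    _ = r ^ 2 * y ^ (1 - 2 * β) := by
        rw [mul_assoc, ← rpow_two y, ← rpow_add hy]
        ring_nf

lemma radialMajorant_le_rpow (β r : ℝ) (hy : 0 < y) :
    radialMajorant β r y ≤ y ^ (-2 * β - 1) := by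
  unfold radialMajorant
  exact (mul_le_of_le_one_left (by positivity) (min_le_left _ _)).trans (min_le_right _ _)

lemma integrableOn_radialMajorant (hβ : 0 < β) (r : ℝ) :
    IntegrableOn (radialMajorant β r) (Ioi 0) := by
  have hmeas := measurable_radialMajorant β r
  have hlow : IntegrableOn (radialMajorant β r) (Ioc 0 1) := by
    refine Measure.integrableOn_of_bounded (M := r ^ 2) (by simp)
      hmeas.aestronglyMeasurable
      ((ae_restrict_iff' measurableSet_Ioc).2 (.of_forall fun y hy => ?_))
    rw [norm_of_nonneg (radialMajorant_nonneg β r hy.1)]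
    exact (radialMajorant_le_sq_mul_sq β r hy.1).trans
      (mul_le_of_le_one_right (by positivity) (pow_le_one₀ hy.1.le hy.2))
  have hhigh : IntegrableOn (radialMajorant β r) (Ioi 1) := by
    refine (integrableOn_Ioi_rpow_of_lt (a := -2 * β - 1) (by linarith) one_pos).mono'
      hmeas.aestronglyMeasurable
      ((ae_restrict_iff' measurableSet_Ioi).2 (.of_forall fun y hy => ?_))
    have hy0 : 0 < y := one_pos.trans hy
    rw [norm_of_nonneg (radialMajorant_nonneg β r hy0)]
    exact radialMajorant_le_rpow β r hy0
  rw [← Ioc_union_Ioi_eq_Ioi zero_le_one]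
  exact hlow.union hhigh

lemma integral_radialMajorant_le (hβ : 0 < β) (hr : 0 < r) (hr1 : r ≤ 1) :
    ∫ y in Ioi 0, radialMajorant β r y ≤ maternModulus β r := by
  have hr' : 1 ≤ 1 / r := by rwa [le_div_iff₀ hr, one_mul]
  have hr0 : 0 < 1 / r := one_pos.trans_le hr'
  have hint := integrableOn_radialMajorant hβ r
  have hint01 : IntervalIntegrable (radialMajorant β r) volume 0 1 :=
    (intervalIntegrable_iff_integrableOn_Ioc_of_le zero_le_one).2
      (hint.mono_set Ioc_subset_Ioi_self)
  have hint1r : IntervalIntegrable (radialMajorant β r) volume 1 (1 / r) :=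
    (intervalIntegrable_iff_integrableOn_Ioc_of_le hr').2
      (hint.mono_set (Ioc_subset_Ioi_self.trans (Ioi_subset_Ioi zero_le_one)))
  have hlow : ∫ y in (0 : ℝ)..1, radialMajorant β r y ≤ r ^ 2 := by
    calc ∫ y in (0 : ℝ)..1, radialMajorant β r y
        ≤ ∫ _ in (0 : ℝ)..1, r ^ 2 :=
          intervalIntegral.integral_mono_on_of_le_Ioo zero_le_one hint01 (by simp) fun y hy =>
            (radialMajorant_le_sq_mul_sq β r hy.1).trans
              (mul_le_of_le_one_right (by positivity) (pow_le_one₀ hy.1.le hy.2.le))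
      _ = r ^ 2 := by simp
  have hmiddle : ∫ y in (1 : ℝ)..1 / r, radialMajorant β r y ≤
      r ^ 2 * ∫ y in (1 : ℝ)..1 / r, y ^ (1 - 2 * β) := by
    have hrpow : IntervalIntegrable (fun y : ℝ => y ^ (1 - 2 * β)) volume 1 (1 / r) :=
      intervalIntegral.intervalIntegrable_rpow (.inr (notMem_uIcc_of_lt one_pos hr0))
    rw [← intervalIntegral.integral_const_mul]
    exact intervalIntegral.integral_mono_on hr' hint1r (hrpow.const_mul _) fun y hy =>
      radialMajorant_le_sq_mul_rpow β r (one_pos.trans_le hy.1)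
  have hhigh : ∫ y in Ioi (1 / r), radialMajorant β r y ≤ r ^ (2 * β) / (2 * β) := by
    calc ∫ y in Ioi (1 / r), radialMajorant β r y
        ≤ ∫ y in Ioi (1 / r), y ^ (-2 * β - 1) :=
          setIntegral_mono_on (hint.mono_set (Ioi_subset_Ioi hr0.le))
            (integrableOn_Ioi_rpow_of_lt (by linarith) hr0) measurableSet_Ioi
            fun y hy => radialMajorant_le_rpow β r (hr0.trans hy)
      _ = r ^ (2 * β) / (2 * β) := by
          rw [integral_Ioi_rpow_of_lt (by linarith) hr0, one_div, inv_rpow hr.le, ← rpow_neg hr.le,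
            ← neg_div_neg_eq]
          ring_nf
  rw [← intervalIntegral.integral_interval_add_Ioi hint (hint.mono_set (Ioi_subset_Ioi hr0.le)),
    ← intervalIntegral.integral_add_adjacent_intervals hint01 hint1r]
  exact add_le_add (add_le_add hlow hmiddle) hhigh

lemma pow_mul_one_add_sq_rpow_le {t : ℝ} (ht : 0 ≤ t) (m : ℕ) (s : ℝ) :
    t ^ m * (1 + t ^ 2) ^ s ≤ (1 + t ^ 2) ^ (m / 2 + s) := by
  have hpow : t ^ m ≤ (1 + t ^ 2) ^ (m / 2 : ℝ) := by
    calc t ^ m = (t ^ 2) ^ (m / 2 : ℝ) := by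
          rw [← rpow_natCast, ← rpow_natCast, ← rpow_mul ht]
          congr 1
          push_cast
          ring
      _ ≤ (1 + t ^ 2) ^ (m / 2 : ℝ) := by gcongr; linarith
  rw [rpow_add (by positivity)]
  gcongr

lemma pow_mul_one_add_sq_rpow_le_min (hβ : 0 ≤ β) (hy : 0 < y) {n : ℕ} (hn : 1 ≤ n) :
    y ^ (n - 1) * (1 + y ^ 2) ^ (-(β + n / 2)) ≤ min 1 (y ^ (-2 * β - 1)) := by
  have hcast : ((n - 1 : ℕ) : ℝ) = n - 1 := by push_cast [hn]; ring
  refine le_min ?_ ?_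
  · refine (pow_mul_one_add_sq_rpow_le hy.le _ _).trans
      (rpow_le_one_of_one_le_of_nonpos (by nlinarith) ?_)
    rw [hcast]
    linarith
  · have hexp : -(β + n / 2 : ℝ) ≤ 0 := neg_nonpos.2 (by positivity)
    calc y ^ (n - 1) * (1 + y ^ 2) ^ (-(β + n / 2))
        ≤ y ^ (n - 1) * (y ^ 2) ^ (-(β + n / 2)) := by
          gcongr ?_ * ?_
          exact rpow_le_rpow_of_nonpos (by positivity) (by linarith) hexp
      _ = y ^ (-2 * β - 1) := by
          rw [← rpow_natCast, ← rpow_two, ← rpow_mul hy.le, ← rpow_add hy, hcast]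
          ring_nf

variable {E : Type*} [NormedAddCommGroup E] [NormedSpace ℝ E] [FiniteDimensional ℝ E]
  [MeasurableSpace E] [BorelSpace E] (μ : Measure E) [μ.IsAddHaarMeasure]

lemma integrable_one_add_norm_sq_rpow (hβ : 0 < β) :
    Integrable (fun x : E => (1 + ‖x‖ ^ 2) ^ (-(β + finrank ℝ E / 2))) μ := by
  have hdim : (finrank ℝ E : ℝ) < 2 * β + finrank ℝ E := by linarith
  convert integrable_rpow_neg_one_add_norm_sq (μ := μ) hdim using 3
  ring

lemma integral_min_mul_one_add_norm_sq_rpow_le (hβ : 0 < β) (hr : 0 < r) (hr1 : r ≤ 1) :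
    ∫ x : E, min 1 (r ^ 2 * ‖x‖ ^ 2) * (1 + ‖x‖ ^ 2) ^ (-(β + finrank ℝ E / 2)) ∂μ ≤
      finrank ℝ E * μ.real (Metric.ball 0 1) * maternModulus β r := by
  rcases subsingleton_or_nontrivial E with _ | _
  · simp [Subsingleton.elim _ (0 : E), finrank_zero_of_subsingleton]
  rw [integral_fun_norm_addHaar μ fun y =>
    min 1 (r ^ 2 * y ^ 2) * (1 + y ^ 2) ^ (-(β + finrank ℝ E / 2)), nsmul_eq_mul, smul_eq_mul,
    mul_assoc]
  gcongr
  refine (integral_mono_of_nonneg ?_ (integrableOn_radialMajorant hβ r) ?_).trans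
    (integral_radialMajorant_le hβ hr hr1)
  · exact (ae_restrict_iff' measurableSet_Ioi).2 (.of_forall fun y hy => by
      have : 0 < y := hy
      positivity)
  · refine (ae_restrict_iff' measurableSet_Ioi).2 (.of_forall fun y hy => ?_)
    have hweight := pow_mul_one_add_sq_rpow_le_min hβ.le hy (finrank_pos (R := ℝ) (M := E))
    calc y ^ (finrank ℝ E - 1) • (min 1 (r ^ 2 * y ^ 2) * (1 + y ^ 2) ^ (-(β + finrank ℝ E / 2)))
        = min 1 (r ^ 2 * y ^ 2) *
            (y ^ (finrank ℝ E - 1) * (1 + y ^ 2) ^ (-(β + finrank ℝ E / 2))) := by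
          rw [smul_eq_mul]; ring
      _ ≤ radialMajorant β r y := by
          unfold radialMajorant
          gcongr

end RadialIntegral

section Matern

open Real

variable {d n : ℕ} {α β : ℝ}

lemma nrm_eq_norm_toLp (x : Fin d → ℝ) : nrm x = ‖WithLp.toLp 2 x‖ := by
  simp [nrm, EuclideanSpace.norm_eq]

lemma nrm_nonneg (x : Fin d → ℝ) : 0 ≤ nrm x := sqrt_nonneg _

lemma nrm_sq (x : Fin d → ℝ) : nrm x ^ 2 = ∑ j, x j ^ 2 := sq_sqrt (by positivity)

lemma continuous_nrm : Continuous (nrm (d := d)) := by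
  unfold nrm
  fun_prop

lemma norm_le_nrm (x : Fin d → ℝ) : ‖x‖ ≤ nrm x :=
  (pi_norm_le_iff_of_nonneg (nrm_nonneg x)).2 fun j =>
    abs_le_sqrt (Finset.single_le_sum (f := fun j => x j ^ 2) (fun _ _ => sq_nonneg _)
      (Finset.mem_univ j))

/-- The surface area of the Euclidean unit sphere of `ℝ^d`, encoded as `d` times the volume of the
unit ball. -/
def sphereArea (d : ℕ) : ℝ :=
  d * (volume : Measure (EuclideanSpace ℝ (Fin d))).real (Metric.ball 0 1)

lemma sphereArea_pos (hd : 0 < d) : 0 < sphereArea d :=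
  mul_pos (by exact_mod_cast hd) <| ENNReal.toReal_pos
    (Metric.measure_ball_pos _ _ one_pos).ne' measure_ball_lt_top.ne

lemma integrable_one_add_nrm_sq_rpow (hβ : 0 < β) :
    Integrable fun ξ : Fin d → ℝ => (1 + nrm ξ ^ 2) ^ (-(β + d / 2)) := by
  simpa [Function.comp_def, nrm_eq_norm_toLp] using
    (PiLp.volume_preserving_toLp (Fin d)).integrable_comp_of_integrable
      (integrable_one_add_norm_sq_rpow (E := EuclideanSpace ℝ (Fin d)) volume hβ)

lemma integral_min_mul_one_add_nrm_sq_rpow_le {r : ℝ} (hβ : 0 < β) (hr : 0 < r) (hr1 : r ≤ 1) :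
    ∫ ξ : Fin d → ℝ, min 1 (r ^ 2 * nrm ξ ^ 2) * (1 + nrm ξ ^ 2) ^ (-(β + d / 2)) ≤
      sphereArea d * maternModulus β r := by
  have h := integral_min_mul_one_add_norm_sq_rpow_le
    (volume : Measure (EuclideanSpace ℝ (Fin d))) hβ hr hr1
  rw [← (PiLp.volume_preserving_toLp (Fin d)).integral_comp
    (MeasurableEquiv.toLp 2 _).measurableEmbedding] at h
  simpa [sphereArea, nrm_eq_norm_toLp] using h

lemma one_sub_cos_sum_mul_le (h ξ : Fin d → ℝ) :
    1 - cos (∑ j, h j * ξ j) ≤ 2 * min 1 (nrm h ^ 2 * nrm ξ ^ 2) := by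
  have hcauchy : (∑ j, h j * ξ j) ^ 2 ≤ nrm h ^ 2 * nrm ξ ^ 2 := by
    rw [nrm_sq, nrm_sq]
    exact Finset.sum_mul_sq_le_sq_mul_sq _ _ _
  rw [mul_min_of_nonneg _ _ zero_le_two, le_min_iff]
  constructor
  · linarith [neg_one_le_cos (∑ j, h j * ξ j)]
  · linarith [one_sub_sq_div_two_le_cos (x := ∑ j, h j * ξ j), sq_nonneg (∑ j, h j * ξ j)]

lemma integrable_cos_sum_mul {g : (Fin d → ℝ) → ℝ} (hg : Integrable g) (x : Fin d → ℝ) :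
    Integrable fun ξ => cos (∑ j, x j * ξ j) * g ξ :=
  hg.bdd_mul (c := 1) (by fun_prop : Continuous fun ξ : Fin d → ℝ =>
    cos (∑ j, x j * ξ j)).aestronglyMeasurable (.of_forall fun _ => abs_cos_le_one _)

lemma abs_cosTransform_zero_sub_le {g : (Fin d → ℝ) → ℝ} (hg : AEStronglyMeasurable g)
    (hβ : 0 < β) (hdecay : ∀ ξ, |g ξ| ≤ (1 + nrm ξ ^ 2) ^ (-(β + d / 2)))
    {h : Fin d → ℝ} (h0 : 0 < nrm h) (h1 : nrm h ≤ 1) :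
    |cosTransform g 0 - cosTransform g h| ≤ 2 * sphereArea d * maternModulus β (nrm h) := by
  have hweight := integrable_one_add_nrm_sq_rpow (d := d) hβ
  have hgi : Integrable g := hweight.mono' hg (.of_forall hdecay)
  have hincrement : cosTransform g 0 - cosTransform g h =
      ∫ ξ, (1 - cos (∑ j, h j * ξ j)) * g ξ := by
    rw [cosTransform, cosTransform,
      ← integral_sub (integrable_cos_sum_mul hgi _) (integrable_cos_sum_mul hgi _)]
    simp only [Pi.zero_apply, zero_mul, Finset.sum_const_zero, cos_zero, sub_mul]
  have hmajorant : Integrable fun ξ : Fin d → ℝ =>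
      min 1 (nrm h ^ 2 * nrm ξ ^ 2) * (1 + nrm ξ ^ 2) ^ (-(β + d / 2)) := by
    have hmin : Continuous fun ξ : Fin d → ℝ => min 1 (nrm h ^ 2 * nrm ξ ^ 2) := by
      have := continuous_nrm (d := d)
      fun_prop
    refine hweight.bdd_mul (c := 1) hmin.aestronglyMeasurable (.of_forall fun ξ => ?_)
    rw [norm_of_nonneg (by positivity)]
    exact min_le_left _ _
  rw [hincrement, ← norm_eq_abs]
  calc ‖∫ ξ, (1 - cos (∑ j, h j * ξ j)) * g ξ‖
      ≤ ∫ ξ : Fin d → ℝ,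
          2 * (min 1 (nrm h ^ 2 * nrm ξ ^ 2) * (1 + nrm ξ ^ 2) ^ (-(β + d / 2))) := by
        refine norm_integral_le_of_norm_le (hmajorant.const_mul 2) (.of_forall fun ξ => ?_)
        rw [norm_mul, norm_of_nonneg (sub_nonneg.2 (cos_le_one _)), ← mul_assoc]
        exact mul_le_mul (one_sub_cos_sum_mul_le h ξ) (hdecay ξ) (abs_nonneg _) (by positivity)
    _ ≤ 2 * sphereArea d * maternModulus β (nrm h) := by
        rw [integral_const_mul, mul_assoc]
        gcongr
        exact integral_min_mul_one_add_nrm_sq_rpow_le hβ h0 h1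

/-- The spectral density `(1 + ‖ξ‖₂²) ^ (-(α + d/2))` of the Matérn kernel. -/
def maternWeight (α : ℝ) (d : ℕ) (ξ : Fin d → ℝ) : ℝ := (1 + nrm ξ ^ 2) ^ (-(α + d / 2))

lemma matern_eq_cosTransform (α : ℝ) (d : ℕ) : matern α d = cosTransform (maternWeight α d) := by
  funext x
  simp only [matern, cosTransform, maternWeight, nrm_sq]

lemma continuous_maternWeight (α : ℝ) (d : ℕ) : Continuous (maternWeight α d) :=
  ((continuous_nrm.pow 2).const_add 1).rpow_const fun _ =>
    .inl (add_pos_of_pos_of_nonneg one_pos (sq_nonneg _)).ne'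

lemma maternWeight_nonneg (α : ℝ) (ξ : Fin d → ℝ) : 0 ≤ maternWeight α d ξ := by
  unfold maternWeight
  positivity

lemma norm_pow_mul_maternWeight_le (α : ℝ) (m : ℕ) (ξ : Fin d → ℝ) :
    ‖ξ‖ ^ m * maternWeight α d ξ ≤ (1 + nrm ξ ^ 2) ^ (-(α - m / 2 + d / 2)) := by
  calc ‖ξ‖ ^ m * maternWeight α d ξ ≤ nrm ξ ^ m * maternWeight α d ξ := by
        gcongr
        exacts [maternWeight_nonneg α ξ, norm_le_nrm ξ]
    _ ≤ (1 + nrm ξ ^ 2) ^ (m / 2 + -(α + d / 2)) :=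
        pow_mul_one_add_sq_rpow_le (nrm_nonneg ξ) m _
    _ = (1 + nrm ξ ^ 2) ^ (-(α - m / 2 + d / 2)) := by ring_nf

lemma hasMoments_maternWeight (hn : n < 2 * α) : HasMoments n (maternWeight α d) := by
  have hcont := continuous_maternWeight α d
  refine ⟨hcont.aestronglyMeasurable, fun m hm => ?_⟩
  have hmn : (m : ℝ) ≤ n := by exact_mod_cast hm
  refine (integrable_one_add_nrm_sq_rpow (β := α - m / 2) (by linarith)).mono'
    (by fun_prop) (.of_forall fun ξ => ?_)
  rw [norm_mul, norm_pow, norm_norm, norm_norm, norm_of_nonneg (maternWeight_nonneg α ξ)]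
  exact norm_pow_mul_maternWeight_le α m ξ

lemma contDiff_matern (hn : n < 2 * α) : ContDiff ℝ n (matern α d) := by
  rw [matern_eq_cosTransform]
  exact contDiff_cosTransform (hasMoments_maternWeight hn)

lemma abs_mder_matern_zero_sub_le {l : ℕ} (hl : l < α) {k : Fin d → ℕ} (hk : ∑ j, k j = 2 * l)
    {h : Fin d → ℝ} (h0 : 0 < nrm h) (h1 : nrm h ≤ 1) :
    |mder d k (matern α d) 0 - mder d k (matern α d) h| ≤
      2 * sphereArea d * maternModulus (α - l) (nrm h) := by
  have hmoments : HasMoments (2 * l) (maternWeight α d) :=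
    hasMoments_maternWeight (by push_cast; linarith)
  rw [matern_eq_cosTransform, mder_cosTransform hk hmoments]
  have hcont : Continuous fun ξ => (-1) ^ l * (∏ j, ξ j ^ k j) * maternWeight α d ξ :=
    .mul (by fun_prop) (continuous_maternWeight α d)
  refine abs_cosTransform_zero_sub_le hcont.aestronglyMeasurable (sub_pos.2 hl) (fun ξ => ?_) h0 h1
  calc |(-1) ^ l * (∏ j, ξ j ^ k j) * maternWeight α d ξ|
      = |∏ j, ξ j ^ k j| * maternWeight α d ξ := by
        rw [abs_mul, abs_mul, abs_neg_one_pow, one_mul, abs_of_nonneg (maternWeight_nonneg α ξ)]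
    _ ≤ ‖ξ‖ ^ (2 * l) * maternWeight α d ξ := by
        rw [← hk]
        gcongr
        exacts [maternWeight_nonneg α ξ, abs_prod_pow_le k ξ]
    _ ≤ (1 + nrm ξ ^ 2) ^ (-(α - l + d / 2)) := by
        simpa using norm_pow_mul_maternWeight_le α (2 * l) ξ

lemma natCast_lbelow (hα : 0 < α) : (lbelow α : ℝ) = ⌈α⌉₊ - 1 := by
  simp [lbelow, Nat.one_le_ceil_iff.2 hα]

lemma lbelow_lt (hα : 0 < α) : lbelow α < α := by
  linarith [natCast_lbelow hα, Nat.ceil_lt_add_one hα.le]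

lemma le_lbelow_add_one (hα : 0 < α) : α ≤ lbelow α + 1 := by
  linarith [natCast_lbelow hα, Nat.le_ceil α]

lemma isNatVal_iff_sub_lbelow_eq_one (hα : 0 < α) : IsNatVal α ↔ α - lbelow α = 1 := by
  rw [natCast_lbelow hα]
  constructor
  · rintro ⟨n, rfl⟩
    simp
  · intro h
    exact ⟨⌈α⌉₊, by linarith⟩

end Matern

/-- Lemma `matern smooth`, Lipschitz part: for a multi-index `k` with
`|k| = 2⌊α⌋⁻`, near `0` the derivative `∂^k K_α` satisfies
`|∂^k K_α(0) − ∂^k K_α(h)| ≲ ‖h‖₂^{2(α−⌊α⌋⁻)}` when `α ∉ ℕ` and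
`≲ ‖h‖₂² ln(1/‖h‖₂)` when `α ∈ ℕ`. -/
theorem stmt7 (α : ℝ) (hα : 0 < α) (d : ℕ) (hd : 1 ≤ d)
    (k : Fin d → ℕ) (hk : (∑ j, k j) = 2 * lbelow α) :
    ContDiff ℝ ((2 * lbelow α : ℕ) : ℕ∞) (matern α d) ∧
    ∃ C : ℝ, 0 < C ∧ ∃ δ : ℝ, 0 < δ ∧ δ < 1 ∧
      ∀ h : Fin d → ℝ, 0 < nrm h → nrm h ≤ δ →
        (¬ IsNatVal α →
          |mder d k (matern α d) 0 - mder d k (matern α d) h| ≤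
            C * nrm h ^ (2 * (α - (lbelow α : ℝ)))) ∧
        (IsNatVal α →
          |mder d k (matern α d) 0 - mder d k (matern α d) h| ≤
            C * (nrm h ^ (2 : ℕ) * Real.log (1 / nrm h))) := by
  have hl := lbelow_lt hα
  have hβ : 0 < α - lbelow α := sub_pos.2 hl
  have harea := sphereArea_pos hd
  refine ⟨contDiff_matern (by push_cast; linarith), ?_⟩
  by_cases hnat : IsNatVal α
  · refine ⟨2 * sphereArea d * (5 / 2), by positivity, 1 / 3, by norm_num, by norm_num,
      fun h h0 hδ => ⟨absurd hnat, fun _ => ?_⟩⟩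
    refine (abs_mder_matern_zero_sub_le hl hk h0 (by linarith)).trans ?_
    rw [(isNatVal_iff_sub_lbelow_eq_one hα).1 hnat, mul_assoc _ (5 / 2 : ℝ)]
    gcongr
    exact maternModulus_one_le_log h0 hδ
  · have hβ1 : α - lbelow α < 1 :=
      lt_of_le_of_ne (by linarith [le_lbelow_add_one hα])
        (mt (isNatVal_iff_sub_lbelow_eq_one hα).2 hnat)
    have hβ2 : 0 < 2 - 2 * (α - lbelow α) := by linarith
    refine ⟨2 * sphereArea d * (1 + 1 / (2 - 2 * (α - lbelow α)) + 1 / (2 * (α - lbelow α))),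
      by positivity, 1 / 3, by norm_num, by norm_num, fun h h0 hδ => ⟨fun _ => ?_, hnat.elim⟩⟩
    refine (abs_mder_matern_zero_sub_le hl hk h0 (by linarith)).trans ?_
    rw [mul_assoc _ (_ + _)]
    gcongr
    exact maternModulus_le_rpow hβ hβ1 h0 (by linarith)
end
end
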